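/- Let q = (q₁,q₂) ∈ ℂ². There exists (μ₁,μ₂) ∈ ℂ² with (μ₁,μ₂) ≠ (0,0) such that F_{(q₁,q₂)}(λ₁,λ₂) = (μ₁λ₁ + μ₂λ₂)³ for all λ₁, λ₂ ∈ ℂ if and only if q₁ = 0 and q₂⁶ = 1. Equivalently, the Fermat cubic surface has exactly six triple points under the twistor projection, namely the quaternions q₂·j where q₂ ranges over the six sixth roots of unity (i.e. ±j, ±(1/2)j ± (√3/2)k). -/

import Mathlib

open Complex

/-- The restriction of the Fermat cubic `z₁³+z₂³+z₃³+z₄³` to the twistor fibre over the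
quaternion `q = q₁ + q₂·j`, as a binary cubic form in `(λ₁, λ₂)`. -/
noncomputable def fermatFibreForm (q₁ q₂ l₁ l₂ : ℂ) : ℂ :=
  (l₁ * q₁ - l₂ * (starRingEnd ℂ) q₂) ^ 3 + (l₁ * q₂ + l₂ * (starRingEnd ℂ) q₁) ^ 3
    + l₁ ^ 3 + l₂ ^ 3

/-!
A binary cubic form over an algebraically closed field is the cube of a linear form if and only if
its Hessian vanishes. The Hessian of a sum of cubes `∑ Lᵢ³` of linear forms is
`∑_{i < j} [Lᵢ, Lⱼ]² Lᵢ Lⱼ`, where `[Lᵢ, Lⱼ]` is the determinant; for the fibre over `q₁ + q₂ j` the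
first two forms have determinant `‖q₁‖² + ‖q₂‖²`, and adding the `y²` coefficient to the conjugate
of the `x²` coefficient leaves `2 q̄₁ q₂²`. A vanishing Hessian therefore forces `q₁ = 0` or
`q₂ = 0`, and in both cases the cubic is diagonal, `a x³ + d y³`, with Hessian `a d x y`. If
`q₁ = 0`, then `a d = (q₂³ + 1)(1 - q̄₂³)`, which vanishes exactly when `q₂⁶ = 1`. If `q₂ = 0`, then
`a d = ‖q₁³ + 1‖²`, and its vanishing makes the whole cubic zero: the fibre lies in the surface.
-/

open scoped ComplexConjugate

/-- A binary cubic form `a x³ + 3 b x² y + 3 c x y² + d y³`, recorded by its coefficients. The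
binomial normalisation keeps its Hessian free of numerical factors. -/
@[ext]
structure BinaryCubic (R : Type*) where
  a : R
  b : R
  c : R
  d : R

namespace BinaryCubic

section Zero

variable {R : Type*} [Zero R]

instance : Zero (BinaryCubic R) := ⟨⟨0, 0, 0, 0⟩⟩

theorem zero_def : (0 : BinaryCubic R) = ⟨0, 0, 0, 0⟩ := rfl

end Zero

section CommRing

variable {R : Type*} [CommRing R]

/-- The function `R² → R` given by a binary cubic form. -/
def eval (f : BinaryCubic R) (x y : R) : R :=
  f.a * x ^ 3 + 3 * f.b * x ^ 2 * y + 3 * f.c * x * y ^ 2 + f.d * y ^ 3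

/-- The Hessian covariant of a binary cubic form, as the triple of coefficients of `x²`, `x y` and
`y²`. It is the determinant of second partial derivatives divided by `36`. -/
def hessian (f : BinaryCubic R) : R × R × R :=
  (f.a * f.c - f.b ^ 2, f.a * f.d - f.b * f.c, f.b * f.d - f.c ^ 2)

/-- The cube of the linear form `m x + n y`. -/
def linearCube (m n : R) : BinaryCubic R := ⟨m ^ 3, m ^ 2 * n, m * n ^ 2, n ^ 3⟩

theorem eval_linearCube (m n x y : R) : (linearCube m n).eval x y = (m * x + n * y) ^ 3 := by
  simp only [eval, linearCube]
  ring

theorem eval_injective [IsAddTorsionFree R] :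
    Function.Injective (eval : BinaryCubic R → R → R → R) := by
  intro f g hfg
  have hval (x y : R) : f.eval x y = g.eval x y := congrFun₂ hfg x y
  simp only [eval] at hval
  have ha : f.a = g.a := by linear_combination hval 1 0
  have hd : f.d = g.d := by linear_combination hval 0 1
  have hb : f.b = g.b := nsmul_right_injective (n := 6) (by norm_num) <| by
    linear_combination hval 1 1 - hval 1 (-1) - 2 * hd
  have hc : f.c = g.c := nsmul_right_injective (n := 6) (by norm_num) <| by
    linear_combination hval 1 1 + hval 1 (-1) - 2 * ha
  exact BinaryCubic.ext ha hb hc hd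

theorem linearCube_eq_zero_iff [IsReduced R] {m n : R} :
    linearCube m n = 0 ↔ m = 0 ∧ n = 0 := by
  constructor
  · intro h
    simp only [linearCube, zero_def, mk.injEq] at h
    exact ⟨eq_zero_of_pow_eq_zero h.1, eq_zero_of_pow_eq_zero h.2.2.2⟩
  · rintro ⟨rfl, rfl⟩
    simp [linearCube, zero_def]

theorem hessian_linearCube (m n : R) : (linearCube m n).hessian = 0 := by
  simp only [hessian, linearCube, Prod.mk_eq_zero]
  refine ⟨?_, ?_, ?_⟩ <;> ring

theorem hessian_diagonal_eq_zero_iff [NoZeroDivisors R] {a d : R} :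
    (⟨a, 0, 0, d⟩ : BinaryCubic R).hessian = 0 ↔ a = 0 ∨ d = 0 := by
  simp [hessian]

end CommRing

section IsAlgClosed

variable {K : Type*} [Field K] [IsAlgClosed K]

theorem exists_eq_linearCube_of_hessian_eq_zero {f : BinaryCubic K} (hf : f.hessian = 0) :
    ∃ m n, f = linearCube m n := by
  obtain ⟨a, b, c, d⟩ := f
  simp only [hessian, Prod.mk_eq_zero] at hf
  obtain ⟨hac, had, hbd⟩ := hf
  by_cases ha : a = 0
  · subst ha
    have hb : b = 0 := by simpa using hac
    subst hb
    have hc : c = 0 := by simpa using hbd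
    subst hc
    obtain ⟨n, hn⟩ := IsAlgClosed.exists_pow_nat_eq d (n := 3) (by norm_num)
    exact ⟨0, n, by simp [linearCube, hn]⟩
  · obtain ⟨m, rfl⟩ := IsAlgClosed.exists_pow_nat_eq a (n := 3) (by norm_num)
    have hm : m ≠ 0 := by rintro rfl; simp at ha
    refine ⟨m, b / m ^ 2, ?_⟩
    simp only [linearCube, mk.injEq, true_and]
    refine ⟨?_, ?_, ?_⟩ <;> field_simp
    · linear_combination hac
    · linear_combination m ^ 3 * had + b * hac

theorem exists_eval_eq_linear_pow_three_iff [CharZero K] (f : BinaryCubic K) :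
    (∃ m n : K, (m, n) ≠ (0, 0) ∧ ∀ x y, f.eval x y = (m * x + n * y) ^ 3) ↔
      f ≠ 0 ∧ f.hessian = 0 := by
  constructor
  · rintro ⟨m, n, hmn, h⟩
    obtain rfl : f = linearCube m n :=
      eval_injective <| funext₂ fun x y => (h x y).trans (eval_linearCube m n x y).symm
    exact ⟨fun h0 => hmn (Prod.mk_eq_zero.2 (linearCube_eq_zero_iff.1 h0)), hessian_linearCube m n⟩
  · rintro ⟨hne, hH⟩
    obtain ⟨m, n, rfl⟩ := exists_eq_linearCube_of_hessian_eq_zero hH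
    exact ⟨m, n, fun h0 => hne (linearCube_eq_zero_iff.2 (Prod.mk_eq_zero.1 h0)),
      eval_linearCube m n⟩

end IsAlgClosed

end BinaryCubic

open BinaryCubic

/-- The coefficients of `fermatFibreForm q₁ q₂` as a binary cubic form. -/
noncomputable def fermatFibreCubic (q₁ q₂ : ℂ) : BinaryCubic ℂ where
  a := q₁ ^ 3 + q₂ ^ 3 + 1
  b := q₂ ^ 2 * conj q₁ - q₁ ^ 2 * conj q₂
  c := q₁ * conj q₂ ^ 2 + q₂ * conj q₁ ^ 2
  d := conj q₁ ^ 3 - conj q₂ ^ 3 + 1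

theorem fermatFibreForm_eq_eval (q₁ q₂ l₁ l₂ : ℂ) :
    fermatFibreForm q₁ q₂ l₁ l₂ = (fermatFibreCubic q₁ q₂).eval l₁ l₂ := by
  simp only [fermatFibreForm, fermatFibreCubic, eval]
  ring

theorem fermatFibreCubic_zero_left (q₂ : ℂ) :
    fermatFibreCubic 0 q₂ = ⟨q₂ ^ 3 + 1, 0, 0, 1 - conj (q₂ ^ 3)⟩ := by
  simp [fermatFibreCubic, neg_add_eq_sub]

theorem fermatFibreCubic_zero_right (q₁ : ℂ) :
    fermatFibreCubic q₁ 0 = ⟨q₁ ^ 3 + 1, 0, 0, conj (q₁ ^ 3 + 1)⟩ := by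
  simp [fermatFibreCubic]

theorem hessian_fermatFibreCubic_zero_left_eq_zero_iff {q₂ : ℂ} :
    (fermatFibreCubic 0 q₂).hessian = 0 ↔ q₂ ^ 6 = 1 := by
  have hconj : 1 - conj (q₂ ^ 3) = 0 ↔ q₂ ^ 3 = 1 := by
    rw [sub_eq_zero, eq_comm, map_eq_one_iff _ (starRingEnd ℂ).injective]
  rw [fermatFibreCubic_zero_left, hessian_diagonal_eq_zero_iff, hconj, add_eq_zero_iff_eq_neg,
    or_comm, ← sq_eq_one_iff, ← pow_mul]

theorem hessian_fermatFibreCubic_zero_right_eq_zero_iff {q₁ : ℂ} :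
    (fermatFibreCubic q₁ 0).hessian = 0 ↔ q₁ ^ 3 = -1 := by
  rw [fermatFibreCubic_zero_right, hessian_diagonal_eq_zero_iff, map_eq_zero, or_self,
    add_eq_zero_iff_eq_neg]

theorem eq_zero_or_eq_zero_of_hessian_fermatFibreCubic_eq_zero {q₁ q₂ : ℂ}
    (h : (fermatFibreCubic q₁ q₂).hessian = 0) : q₁ = 0 ∨ q₂ = 0 := by
  simp only [hessian, fermatFibreCubic, Prod.mk_eq_zero] at h
  obtain ⟨hxx, -, hyy⟩ := h
  have hxx_conj : conj q₁ * conj q₂ * (q₁ * conj q₁ + q₂ * conj q₂) ^ 2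
      + conj q₁ * q₂ ^ 2 + conj q₂ * q₁ ^ 2 = 0 := by
    have := congrArg conj hxx
    simp only [map_add, map_sub, map_mul, map_pow, map_one, map_zero, conj_conj] at this
    linear_combination this
  have hyy' : -(conj q₁ * conj q₂ * (q₁ * conj q₁ + q₂ * conj q₂) ^ 2)
      + conj q₁ * q₂ ^ 2 - conj q₂ * q₁ ^ 2 = 0 := by
    linear_combination hyy
  have hprod : conj q₁ * q₂ ^ 2 = 0 := by linear_combination (hxx_conj + hyy') / 2
  simpa using hprod

theorem hessian_fermatFibreCubic_eq_zero_iff {q₁ q₂ : ℂ} :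
    (fermatFibreCubic q₁ q₂).hessian = 0 ↔ q₁ = 0 ∧ q₂ ^ 6 = 1 ∨ q₂ = 0 ∧ q₁ ^ 3 = -1 := by
  constructor
  · intro h
    rcases eq_zero_or_eq_zero_of_hessian_fermatFibreCubic_eq_zero h with rfl | rfl
    · exact .inl ⟨rfl, hessian_fermatFibreCubic_zero_left_eq_zero_iff.1 h⟩
    · exact .inr ⟨rfl, hessian_fermatFibreCubic_zero_right_eq_zero_iff.1 h⟩
  · rintro (⟨rfl, h⟩ | ⟨rfl, h⟩)
    · exact hessian_fermatFibreCubic_zero_left_eq_zero_iff.2 h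
    · exact hessian_fermatFibreCubic_zero_right_eq_zero_iff.2 h

theorem fermatFibreCubic_zero_left_ne_zero (q₂ : ℂ) : fermatFibreCubic 0 q₂ ≠ 0 := by
  intro h
  simp only [fermatFibreCubic_zero_left, zero_def, BinaryCubic.mk.injEq, true_and] at h
  obtain ⟨ha, hd⟩ := h
  rw [eq_neg_of_add_eq_zero_left ha] at hd
  norm_num at hd

theorem fermatFibreCubic_zero_right_eq_zero {q₁ : ℂ} (h : q₁ ^ 3 = -1) :
    fermatFibreCubic q₁ 0 = 0 := by
  simp [fermatFibreCubic_zero_right, zero_def, h]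

/-- The binary cubic obtained by restricting the Fermat cubic to the twistor fibre over
`q = q₁ + q₂·j` is the cube of a nonzero linear form (i.e. `q` is a triple point of the
Fermat cubic under the twistor projection) if and only if `q₁ = 0` and `q₂⁶ = 1`. -/
theorem fermat_triple_points (q₁ q₂ : ℂ) :
    (∃ μ₁ μ₂ : ℂ, (μ₁, μ₂) ≠ (0, 0) ∧
        ∀ l₁ l₂ : ℂ, fermatFibreForm q₁ q₂ l₁ l₂ = (μ₁ * l₁ + μ₂ * l₂) ^ 3) ↔
      (q₁ = 0 ∧ q₂ ^ 6 = 1) := by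
  simp only [fermatFibreForm_eq_eval, exists_eval_eq_linear_pow_three_iff,
    hessian_fermatFibreCubic_eq_zero_iff]
  constructor
  · rintro ⟨hne, h | ⟨rfl, h⟩⟩
    · exact h
    · exact absurd (fermatFibreCubic_zero_right_eq_zero h) hne
  · rintro ⟨rfl, h⟩
    exact ⟨fermatFibreCubic_zero_left_ne_zero q₂, .inl ⟨rfl, h⟩⟩
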